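/- (Product perturbation bound for incoherent unit vectors.) Let d ≥ 1 and for each l ∈ [d] let a_l, b_l, c_l ∈ ℝ^{p_l} be unit vectors satisfying ‖a_l − b_l‖₂ ≤ δ and |⟨b_l, c_l⟩| ≤ η, where δ, η ≥ 0. Then |∏_{l=1}^d ⟨a_l, c_l⟩ − ∏_{l=1}^d ⟨b_l, c_l⟩| ≤ Σ_{m=1}^d C(d,m)·δ^m·η^{d−m} ≤ d·δ·(δ + η)^{d−1}, where C(d,m) is the binomial coefficient. -/

import Mathlib

open scoped BigOperators RealInnerProductSpace

noncomputable section

/-!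
By the binomial theorem the middle sum is `(δ + η) ^ d - η ^ d`. Cauchy–Schwarz reduces the first
inequality to scalars `x l = ⟪a l, c l⟫` and `y l = ⟪b l, c l⟫` with `|x l - y l| ≤ δ` and
`|y l| ≤ η`, hence `|x l| ≤ δ + η`. Factors are split off one at a time by
`x * X - y * Y = x * (X - Y) + (x - y) * Y`; the bounds satisfy the same identity with `δ + η` and
`η` in place of `x` and `y`, so the induction closes exactly. The second inequality is the mean
value bound for `t ↦ t ^ d` on `[η, δ + η]`.
-/

section Products

variable {ι R : Type*} [NormedCommRing R] [NormOneClass R] {s : Finset ι} {x y : ι → R}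
  {δ η : ι → ℝ}

theorem norm_prod_le_prod_of_norm_le (hy : ∀ i ∈ s, ‖y i‖ ≤ η i) :
    ‖∏ i ∈ s, y i‖ ≤ ∏ i ∈ s, η i :=
  (s.norm_prod_le y).trans (Finset.prod_le_prod (fun _ _ => norm_nonneg _) hy)

theorem norm_prod_sub_prod_le_prod_add_sub_prod (hxy : ∀ i ∈ s, ‖x i - y i‖ ≤ δ i)
    (hy : ∀ i ∈ s, ‖y i‖ ≤ η i) :
    ‖∏ i ∈ s, x i - ∏ i ∈ s, y i‖ ≤ ∏ i ∈ s, (δ i + η i) - ∏ i ∈ s, η i := by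
  induction s using Finset.cons_induction with
  | empty => simp
  | cons i s hi ih =>
    rw [Finset.forall_mem_cons] at hxy hy
    simp only [Finset.prod_cons]
    have hx : ‖x i‖ ≤ δ i + η i :=
      calc ‖x i‖ = ‖(x i - y i) + y i‖ := by rw [sub_add_cancel]
        _ ≤ δ i + η i := norm_add_le_of_le hxy.1 hy.1
    calc ‖x i * ∏ j ∈ s, x j - y i * ∏ j ∈ s, y j‖
        = ‖x i * (∏ j ∈ s, x j - ∏ j ∈ s, y j) + (x i - y i) * ∏ j ∈ s, y j‖ := by ring_nf
      _ ≤ (δ i + η i) * (∏ j ∈ s, (δ j + η j) - ∏ j ∈ s, η j) + δ i * ∏ j ∈ s, η j :=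
        norm_add_le_of_le (norm_mul_le_of_le hx (ih hxy.2 hy.2))
          (norm_mul_le_of_le hxy.1 (norm_prod_le_prod_of_norm_le hy.2))
      _ = (δ i + η i) * ∏ j ∈ s, (δ j + η j) - η i * ∏ j ∈ s, η j := by ring

end Products

theorem sum_Icc_one_choose_mul_pow_mul_pow {R : Type*} [CommRing R] (n : ℕ) (x y : R) :
    ∑ m ∈ Finset.Icc 1 n, (n.choose m : R) * x ^ m * y ^ (n - m) = (x + y) ^ n - y ^ n := by
  rw [add_pow, Finset.sum_range_eq_add_Ico _ n.succ_pos, Nat.succ_eq_add_one,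
    Finset.Ico_add_one_right_eq_Icc]
  simp only [pow_zero, one_mul, Nat.sub_zero, Nat.choose_zero_right, Nat.cast_one, mul_one,
    add_sub_cancel_left]
  exact Finset.sum_congr rfl fun m _ => by ring

theorem add_pow_sub_pow_le {R : Type*} [CommRing R] [LinearOrder R] [IsOrderedRing R] {x y : R}
    (hx : 0 ≤ x) (hy : 0 ≤ y) (n : ℕ) :
    (x + y) ^ n - y ^ n ≤ n * x * (x + y) ^ (n - 1) :=
  calc (x + y) ^ n - y ^ n ≤ |x + y - y| * n * max |x + y| |y| ^ (n - 1) :=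
        (le_abs_self _).trans (abs_pow_sub_pow_le _ _ _)
    _ = n * x * (x + y) ^ (n - 1) := by
        rw [add_sub_cancel_right, abs_of_nonneg hx, abs_of_nonneg hy,
          abs_of_nonneg (add_nonneg hx hy), max_eq_left (le_add_of_nonneg_left hx), mul_comm x]

theorem statement14_general {𝕜 ι : Type*} [RCLike 𝕜] [Fintype ι] {E : ι → Type*}
    [∀ l, SeminormedAddCommGroup (E l)] [∀ l, InnerProductSpace 𝕜 (E l)]
    (a b c : (l : ι) → E l) (hc : ∀ l, ‖c l‖ ≤ 1)
    (δ η : ℝ) (hδ : 0 ≤ δ) (hη : 0 ≤ η)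
    (hab : ∀ l, ‖a l - b l‖ ≤ δ) (hbc : ∀ l, ‖inner 𝕜 (b l) (c l)‖ ≤ η) :
    ‖(∏ l, inner 𝕜 (a l) (c l)) - ∏ l, inner 𝕜 (b l) (c l)‖ ≤
        ∑ m ∈ Finset.Icc 1 (Fintype.card ι),
          ((Fintype.card ι).choose m : ℝ) * δ ^ m * η ^ (Fintype.card ι - m) ∧
      ∑ m ∈ Finset.Icc 1 (Fintype.card ι),
          ((Fintype.card ι).choose m : ℝ) * δ ^ m * η ^ (Fintype.card ι - m) ≤
        Fintype.card ι * δ * (δ + η) ^ (Fintype.card ι - 1) := by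
  rw [sum_Icc_one_choose_mul_pow_mul_pow]
  refine ⟨?_, add_pow_sub_pow_le hδ hη _⟩
  have hac (l : ι) : ‖inner 𝕜 (a l) (c l) - inner 𝕜 (b l) (c l)‖ ≤ δ :=
    calc ‖inner 𝕜 (a l) (c l) - inner 𝕜 (b l) (c l)‖ = ‖inner 𝕜 (a l - b l) (c l)‖ := by
          rw [inner_sub_left]
      _ ≤ ‖a l - b l‖ * ‖c l‖ := norm_inner_le_norm _ _
      _ ≤ δ := (mul_le_of_le_one_right (norm_nonneg _) (hc l)).trans (hab l)
  simpa only [Finset.prod_const, Finset.card_univ] using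
    norm_prod_sub_prod_le_prod_add_sub_prod (s := Finset.univ) (fun l _ => hac l) (fun l _ => hbc l)

/-- product perturbation bound for incoherent unit vectors. -/
theorem statement14
    {d : ℕ} (hd : 1 ≤ d) {p : Fin d → ℕ}
    (a b c : (l : Fin d) → EuclideanSpace ℝ (Fin (p l)))
    (ha : ∀ l, ‖a l‖ = 1) (hb : ∀ l, ‖b l‖ = 1) (hc : ∀ l, ‖c l‖ = 1)
    (δ η : ℝ) (hδ : 0 ≤ δ) (hη : 0 ≤ η)
    (hab : ∀ l, ‖a l - b l‖ ≤ δ) (hbc : ∀ l, |⟪b l, c l⟫| ≤ η) :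
    |(∏ l, ⟪a l, c l⟫) - ∏ l, ⟪b l, c l⟫| ≤
        ∑ m ∈ Finset.Icc 1 d, (d.choose m : ℝ) * δ ^ m * η ^ (d - m) ∧
      ∑ m ∈ Finset.Icc 1 d, (d.choose m : ℝ) * δ ^ m * η ^ (d - m) ≤
        d * δ * (δ + η) ^ (d - 1) := by
  simpa only [Fintype.card_fin, Real.norm_eq_abs] using
    statement14_general (𝕜 := ℝ) a b c (fun l => (hc l).le) δ η hδ hη hab hbc
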